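/- arXiv:1404.4852 — 4 statements merged into one kernel-verified Lean document; each statement's English description precedes it below -/
import Mathlib

section
/- Let r ≥ 1 and let d ≤ v ≤ r be natural numbers. Let a_x, b_x, c, a_y, b_y, l_x, l_y ∈ Z_{2^r}, and define P(x) = a_x x^2 + b_x x + c and Q(y, h) = a_y y^2 + b_y y + 2^{r-d} h. Then 2^{v+d} divides the number of triples of natural numbers (j_x, j_y, j_h) with j_x < 2^v, j_y < 2^v, j_h < 2^d such that P(l_x + 2^{r-v} j_x) = Q(l_y + 2^{r-v} j_y, j_h) holds in Z_{2^r}. -/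
theorem aux_split (n : ℕ) (f : ℕ → ℕ) :
    ∑ x ∈ Finset.range (2 ^ (n + 1)), f x
      = ∑ x ∈ Finset.range (2 ^ n), f (2 * x) + ∑ x ∈ Finset.range (2 ^ n), f (2 * x + 1) := by
  have h : ∀ m : ℕ, ∑ x ∈ Finset.range (2 * m), f x
      = ∑ x ∈ Finset.range m, f (2 * x) + ∑ x ∈ Finset.range m, f (2 * x + 1) := by
    intro m
    induction m with
    | zero => simp
    | succ m ih =>
      rw [Nat.mul_succ, Finset.sum_range_succ, Finset.sum_range_succ, ih,
        Finset.sum_range_succ, Finset.sum_range_succ]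
      ring
  rw [pow_succ, mul_comm, h]

/-- indicator of divisibility -/
def auxI (m t : ℤ) : ℕ := if m ∣ t then 1 else 0

theorem auxI_mul (k m t : ℤ) (hk : k ≠ 0) : auxI (k * m) (k * t) = auxI m t := by
  unfold auxI
  simp only [mul_dvd_mul_iff_left hk]

theorem auxI_zero (k m t : ℤ) (h : ¬ k ∣ t) : auxI (k * m) t = 0 := by
  unfold auxI
  rw [if_neg]
  intro h'
  exact h ((Dvd.intro _ rfl).trans h')

theorem auxI_mul' (k m t M T : ℤ) (hk : k ≠ 0) (hM : M = k * m) (hT : T = k * t) :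
    auxI M T = auxI m t := by
  rw [hM, hT, auxI_mul k m t hk]

theorem auxI_zero' (k m t' M u t : ℤ) (hM : M = k * m) (ht : t = t' + k * u) (h : ¬ k ∣ t') :
    auxI M t = 0 := by
  rw [hM]
  apply auxI_zero
  rw [ht]
  intro h'
  exact h ((dvd_add_left (Dvd.intro _ rfl)).1 h')

theorem aux_dz {a b : ℕ} (h : b = 0) : a ∣ b := h ▸ dvd_zero a

theorem aux_one (w : ℕ) : ∀ (n : ℕ) (A B t : ℤ), A % 2 = 0 → B % 2 = 1 →
    ∑ x ∈ Finset.range (2 ^ (w + n)), auxI (2 ^ w) (A * (x:ℤ) ^ 2 + B * x + t) = 2 ^ n := by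
  induction w with
  | zero => intro n A B t _ _; simp [auxI]
  | succ w ih =>
    intro n A B t hA hB
    rw [show w + 1 + n = (w + n) + 1 by ring, aux_split]
    have key : ∀ e T : ℤ, A * e ^ 2 + B * e + t = 2 * T → ∀ x : ℤ,
        auxI (2 ^ (w + 1)) (A * (2 * x + e) ^ 2 + B * (2 * x + e) + t)
          = auxI (2 ^ w) ((2 * A) * x ^ 2 + (2 * A * e + B) * x + T) := by
      intro e T h x
      exact auxI_mul' 2 _ _ _ _ two_ne_zero (by ring) (by linear_combination h)
    have key0 : ∀ e : ℤ, ¬ 2 ∣ A * e ^ 2 + B * e + t → ∀ x : ℤ,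
        auxI (2 ^ (w + 1)) (A * (2 * x + e) ^ 2 + B * (2 * x + e) + t) = 0 := by
      intro e h x
      exact auxI_zero' 2 (2 ^ w) _ _ (2 * A * x ^ 2 + (2 * A * e + B) * x) _
        (by ring) (by ring) h
    push_cast
    rcases Int.even_or_odd' t with ⟨T, hT | hT⟩
    · have h0 := key 0 T (by rw [hT]; ring)
      have h1 := key0 1 (by rw [hT]; omega)
      simp only [add_zero] at h0
      simp only [h0, h1]
      rw [ih n _ _ _ (by omega) (by omega)]
      simp
    · have h0 := key0 0 (by rw [hT]; omega)
      have h1 := key 1 ((A + B + t) / 2) (by rw [hT]; omega)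
      simp only [add_zero] at h0
      simp only [h0, h1]
      rw [ih n _ _ _ (by omega) (by omega)]
      simp

theorem aux_two (w n : ℕ) (A B t : ℤ) (hB : B % 2 = 1) :
    ∑ x ∈ Finset.range (2 ^ (w + 1 + n)), auxI (2 ^ (w + 1)) (A * (x:ℤ) ^ 2 + B * x + t)
      = 2 ^ n * (auxI 2 t + auxI 2 (A + B + t)) := by
  rw [show w + 1 + n = (w + n) + 1 by ring, aux_split, mul_add]
  have key : ∀ e T : ℤ, A * e ^ 2 + B * e + t = T → 
      ∑ x ∈ Finset.range (2 ^ (w + n)), 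
        auxI (2 ^ (w + 1)) (A * (2 * (x:ℤ) + e) ^ 2 + B * (2 * x + e) + t) = 2 ^ n * auxI 2 T := by
    intro e T h
    by_cases hT : 2 ∣ T
    · obtain ⟨U, rfl⟩ := hT
      have : auxI 2 (2 * U) = 1 := by simp [auxI]
      rw [this, mul_one, ← aux_one w n (2 * A) (2 * A * e + B) U (by omega)
        (by rw [mul_assoc]; omega)]
      apply Finset.sum_congr rfl
      intro x _
      exact auxI_mul' 2 _ _ _ _ two_ne_zero (by ring) (by linear_combination h)
    · have : auxI 2 T = 0 := by simp [auxI, hT]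
      rw [this, mul_zero]
      apply Finset.sum_eq_zero
      intro x _
      exact auxI_zero' 2 (2 ^ w) _ _ (2 * A * (x:ℤ) ^ 2 + (2 * A * e + B) * x) _
        (by ring) (by linear_combination h) hT
  have h0 := key 0 t (by ring)
  have h1 := key 1 (A + B + t) (by ring)
  simp only [add_zero] at h0
  push_cast
  rw [h0, h1]

theorem aux_par (n : ℕ) (A B t : ℤ) :
    ∑ x ∈ Finset.range (2 ^ (n + 1)), auxI 2 (A * (x:ℤ) ^ 2 + B * x + t)
      = 2 ^ n * (auxI 2 t + auxI 2 (A + B + t)) := by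
  rw [aux_split, mul_add]
  have h0 : ∀ x : ℕ, auxI 2 (A * ((2 * x : ℕ):ℤ) ^ 2 + B * ((2 * x : ℕ):ℤ) + t) = auxI 2 t := by
    intro x
    unfold auxI
    rw [show A * ((2 * x : ℕ):ℤ) ^ 2 + B * ((2 * x : ℕ):ℤ) + t
      = 2 * (2 * A * x ^ 2 + B * x) + t by push_cast; ring]
    congr 1
    apply propext
    omega
  have h1 : ∀ x : ℕ, auxI 2 (A * ((2 * x + 1 : ℕ):ℤ) ^ 2 + B * ((2 * x + 1 : ℕ):ℤ) + t)
      = auxI 2 (A + B + t) := by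
    intro x
    unfold auxI
    rw [show A * ((2 * x + 1 : ℕ):ℤ) ^ 2 + B * ((2 * x + 1 : ℕ):ℤ) + t
      = 2 * (2 * A * x ^ 2 + 2 * A * x + B * x) + (A + B + t) by push_cast; ring]
    congr 1
    apply propext
    omega
  simp only [h0, h1]
  simp

theorem aux_four (p q t : ℤ) :
    2 ∣ (auxI 2 t + auxI 2 (q + t)) + (auxI 2 (p + t) + auxI 2 (q + (p + t))) := by
  unfold auxI
  split_ifs <;> omega

/-- the double count -/
def auxN (v w : ℕ) (A B A' B' t : ℤ) : ℕ :=
  ∑ x ∈ Finset.range (2 ^ v), ∑ y ∈ Finset.range (2 ^ v),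
    auxI (2 ^ w) (A * (x:ℤ) ^ 2 + B * x + (A' * (y:ℤ) ^ 2 + B' * y + t))

theorem auxN_comm (v w : ℕ) (A B A' B' t : ℤ) : auxN v w A B A' B' t = auxN v w A' B' A B t := by
  unfold auxN
  rw [Finset.sum_comm]
  refine Finset.sum_congr rfl fun x _ => Finset.sum_congr rfl fun y _ => ?_
  congr 1
  ring

theorem aux_odd (w n : ℕ) (A B A' B' t : ℤ) (hB : B' % 2 = 1) :
    2 ^ (w + 1 + n + n) ∣ auxN (w + 1 + n) (w + 1) A B A' B' t := by
  have : auxN (w + 1 + n) (w + 1) A B A' B' t =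
     2 ^ n * (2 ^ (w + n) * ((auxI 2 t + auxI 2 (A + B + t))
       + (auxI 2 ((A' + B') + t) + auxI 2 (A + B + ((A' + B') + t))))) := by
    unfold auxN
    have e : ∀ x y : ℕ, A * (x:ℤ) ^ 2 + B * x + (A' * (y:ℤ) ^ 2 + B' * y + t)
      = A' * (y:ℤ) ^ 2 + B' * y + (A * (x:ℤ) ^ 2 + B * x + t) := by intros; ring
    simp only [e]
    simp only [aux_two w n A' B' _ hB]
    rw [← Finset.mul_sum, Finset.sum_add_distrib]
    have e2 : ∀ x : ℕ, A' + B' + (A * (x:ℤ) ^ 2 + B * x + t)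
      = A * (x:ℤ) ^ 2 + B * x + (A' + B' + t) := by intros; ring
    simp only [e2]
    rw [show w + 1 + n = (w + n) + 1 by ring, aux_par, aux_par]
    ring
  rw [this]
  obtain ⟨k, hk⟩ := aux_four (A' + B') (A + B) t
  rw [hk]
  exact ⟨k, by ring⟩

theorem aux_N1 (n : ℕ) (A B A' B' t : ℤ) :
    2 ^ (1 + n + n) ∣ auxN (1 + n) 1 A B A' B' t := by
  have : auxN (1 + n) 1 A B A' B' t =
     2 ^ n * (2 ^ n * ((auxI 2 t + auxI 2 (A + B + t))
       + (auxI 2 ((A' + B') + t) + auxI 2 (A + B + ((A' + B') + t))))) := by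
    unfold auxN
    have e : ∀ x y : ℕ, A * (x:ℤ) ^ 2 + B * x + (A' * (y:ℤ) ^ 2 + B' * y + t)
      = A' * (y:ℤ) ^ 2 + B' * y + (A * (x:ℤ) ^ 2 + B * x + t) := by intros; ring
    simp only [e, add_comm 1 n, pow_one (2:ℤ)]
    simp only [aux_par n A' B' _]
    rw [← Finset.mul_sum, Finset.sum_add_distrib]
    have e2 : ∀ x : ℕ, A' + B' + (A * (x:ℤ) ^ 2 + B * x + t)
      = A * (x:ℤ) ^ 2 + B * x + (A' + B' + t) := by intros; ring
    simp only [e2]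
    rw [aux_par, aux_par]
    ring
  rw [this]
  obtain ⟨k, hk⟩ := aux_four (A' + B') (A + B) t
  rw [hk]
  exact ⟨k, by ring⟩

theorem aux_main (w : ℕ) : ∀ (n : ℕ) (A B A' B' t : ℤ),
    2 ^ (w + n + n) ∣ auxN (w + n) w A B A' B' t := by
  induction w using Nat.strong_induction_on with
  | _ w ih =>
  intro n A B A' B' t
  match w, ih with
  | 0, _ => 
    simp [auxN, auxI, ← pow_add]
  | 1, _ => exact aux_N1 n A B A' B' t
  | (w + 2), ih =>
    rcases Int.emod_two_eq_zero_or_one B' with hB' | hB'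
    swap
    · exact aux_odd (w + 1) n A B A' B' t hB'
    rcases Int.emod_two_eq_zero_or_one B with hB | hB
    swap
    · rw [auxN_comm]
      exact aux_odd (w + 1) n A' B' A B t hB
    obtain ⟨b, rfl⟩ := Int.dvd_of_emod_eq_zero hB
    obtain ⟨b', rfl⟩ := Int.dvd_of_emod_eq_zero hB'
    have key : ∀ e e' : ℤ, 2 ^ (w + 2 + n + n) ∣ 
        ∑ x ∈ Finset.range (2 ^ (w + 1 + n)), ∑ y ∈ Finset.range (2 ^ (w + 1 + n)),
        auxI (2 ^ (w + 2)) (A * (2 * (x:ℤ) + e) ^ 2 + (2 * b) * (2 * x + e)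
          + (A' * (2 * (y:ℤ) + e') ^ 2 + (2 * b') * (2 * y + e') + t)) := by
      intro e e'
      by_cases hT : 4 ∣ A * e ^ 2 + 2 * b * e + (A' * e' ^ 2 + 2 * b' * e' + t)
      · obtain ⟨T, hT⟩ := hT
        have := ih w (by omega) (n + 1) A (A * e + b) A' (A' * e' + b') T
        rw [show w + 2 + n + n = w + (n + 1) + (n + 1) by ring]
        convert this using 1
        unfold auxN
        rw [show w + 1 + n = w + (n + 1) by ring]
        refine Finset.sum_congr rfl fun x _ => Finset.sum_congr rfl fun y _ => ?_
        exact auxI_mul' 4 _ _ _ _ four_ne_zero (by ring) (by linear_combination hT)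
      · apply aux_dz
        refine Finset.sum_eq_zero fun x _ => Finset.sum_eq_zero fun y _ => ?_
        exact auxI_zero' 4 (2 ^ w) _ _ (A * (x:ℤ) ^ 2 + (A * e + b) * x
          + (A' * (y:ℤ) ^ 2 + (A' * e' + b') * y)) _ (by ring) (by ring) hT
    have h00 := key 0 0
    have h01 := key 0 1
    have h10 := key 1 0
    have h11 := key 1 1
    simp only [add_zero] at h00 h01 h10
    unfold auxN
    rw [show w + 2 + n = (w + 1 + n) + 1 by ring] at *
    rw [aux_split]
    simp only [aux_split, Finset.sum_add_distrib]
    push_cast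
    exact dvd_add (dvd_add h00 h01) (dvd_add h10 h11)

theorem aux_h (d k : ℕ) (H : ℤ) :
    ∑ h ∈ Finset.range (2 ^ d), auxI (2 ^ (k + d)) (H - 2 ^ k * (h:ℤ)) = auxI (2 ^ k) H := by
  by_cases hT : (2:ℤ) ^ k ∣ H
  · obtain ⟨T, rfl⟩ := hT
    have h2 : (2:ℤ) ^ k ≠ 0 := by positivity
    simp only [← mul_sub, pow_add, auxI_mul _ _ _ h2]
    have := aux_one d 0 0 (-1) T (by norm_num) (by norm_num)
    have e : auxI (2 ^ k) (2 ^ k * T) = 1 := by simp [auxI]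
    rw [e]
    rw [add_zero, pow_zero] at this
    rw [← this]
    refine Finset.sum_congr rfl fun x _ => ?_
    congr 1
    ring
  · have e : auxI (2 ^ k) H = 0 := by simp [auxI, hT]
    rw [e]
    refine Finset.sum_eq_zero fun x _ => ?_
    rw [pow_add]
    apply auxI_zero
    intro h'
    apply hT
    have := dvd_add h' (Dvd.intro (x:ℤ) rfl)
    simpa using this

theorem stmt_16 (r d v : ℕ) (hr : 1 ≤ r) (hdv : d ≤ v) (hv : v ≤ r)
    (aX bX c aY bY lX lY : ZMod (2 ^ r)) :
    (2 ^ (v + d) : ℕ) ∣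
    Nat.card {t : Fin (2 ^ v) × Fin (2 ^ v) × Fin (2 ^ d) //
      aX * (lX + (2 : ZMod (2 ^ r)) ^ (r - v) * ((t.1 : ℕ) : ZMod (2 ^ r))) ^ 2
        + bX * (lX + (2 : ZMod (2 ^ r)) ^ (r - v) * ((t.1 : ℕ) : ZMod (2 ^ r))) + c
      = aY * (lY + (2 : ZMod (2 ^ r)) ^ (r - v) * ((t.2.1 : ℕ) : ZMod (2 ^ r))) ^ 2
        + bY * (lY + (2 : ZMod (2 ^ r)) ^ (r - v) * ((t.2.1 : ℕ) : ZMod (2 ^ r)))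
        + (2 : ZMod (2 ^ r)) ^ (r - d) * ((t.2.2 : ℕ) : ZMod (2 ^ r))} := by
  obtain ⟨w, rfl⟩ := Nat.exists_eq_add_of_le hdv
  obtain ⟨s, rfl⟩ := Nat.exists_eq_add_of_le hv
  obtain ⟨aX, rfl⟩ := ZMod.intCast_surjective aX
  obtain ⟨bX, rfl⟩ := ZMod.intCast_surjective bX
  obtain ⟨c, rfl⟩ := ZMod.intCast_surjective c
  obtain ⟨aY, rfl⟩ := ZMod.intCast_surjective aY
  obtain ⟨bY, rfl⟩ := ZMod.intCast_surjective bY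
  obtain ⟨lX, rfl⟩ := ZMod.intCast_surjective lX
  obtain ⟨lY, rfl⟩ := ZMod.intCast_surjective lY
  rw [show d + w + s - (d + w) = s by omega, show d + w + s - d = s + w by omega]
  have hiff : ∀ x y h : ℕ, 
      ((aX : ZMod (2 ^ (d + w + s))) * (lX + 2 ^ s * (x : ZMod (2 ^ (d + w + s)))) ^ 2
        + bX * (lX + 2 ^ s * (x : ZMod (2 ^ (d + w + s)))) + c
      = aY * (lY + 2 ^ s * (y : ZMod (2 ^ (d + w + s)))) ^ 2
        + bY * (lY + 2 ^ s * (y : ZMod (2 ^ (d + w + s))))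
        + 2 ^ (s + w) * (h : ZMod (2 ^ (d + w + s)))) ↔
      (2:ℤ) ^ (s + w + d) ∣ ((aX * lX ^ 2 + bX * lX + c - aY * lY ^ 2 - bY * lY)
        + 2 ^ s * (2 ^ s * aX * x ^ 2 + (2 * aX * lX + bX) * x
        + (-(2 ^ s * aY) * y ^ 2 + (-(2 * aY * lY + bY)) * y + 0))) - 2 ^ (s + w) * (h:ℤ) := by
    intro x y h
    rw [show s + w + d = d + w + s by ring]
    have := ZMod.intCast_zmod_eq_zero_iff_dvd (((aX * lX ^ 2 + bX * lX + c - aY * lY ^ 2 - bY * lY)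
        + 2 ^ s * (2 ^ s * aX * x ^ 2 + (2 * aX * lX + bX) * x
        + (-(2 ^ s * aY) * y ^ 2 + (-(2 * aY * lY + bY)) * y + 0))) - 2 ^ (s + w) * (h:ℤ)) (2 ^ (d + w + s))
    rw [show (((2 ^ (d + w + s) : ℕ)) : ℤ) = 2 ^ (d + w + s) by push_cast; rfl] at this
    rw [← this, ← sub_eq_zero]
    push_cast
    constructor <;> intro h <;> linear_combination h
  rw [Nat.card_eq_fintype_card, Fintype.card_subtype, Finset.card_filter, Fintype.sum_prod_type]
  simp only [Fintype.sum_prod_type]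
  simp only [hiff]
  generalize (aX * lX ^ 2 + bX * lX + c - aY * lY ^ 2 - bY * lY) = C
  have hred : ∀ F : ℕ → ℕ → ℕ → ℕ, 
     (∑ x : Fin (2 ^ (d + w)), ∑ y : Fin (2 ^ (d + w)), ∑ h : Fin (2 ^ d), F x y h)
      = ∑ x ∈ Finset.range (2 ^ (d + w)), ∑ y ∈ Finset.range (2 ^ (d + w)),
        ∑ h ∈ Finset.range (2 ^ d), F x y h := by
    intro F
    rw [Finset.sum_range]
    refine Finset.sum_congr rfl fun x _ => ?_
    rw [Finset.sum_range]
    refine Finset.sum_congr rfl fun y _ => ?_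
    rw [Finset.sum_range]
  have h2 := hred (fun x y h => auxI ((2:ℤ) ^ (s + w + d)) ((C
        + 2 ^ s * (2 ^ s * aX * x ^ 2 + (2 * aX * lX + bX) * x
        + (-(2 ^ s * aY) * y ^ 2 + (-(2 * aY * lY + bY)) * y + 0))) - 2 ^ (s + w) * (h:ℤ)))
  simp only [aux_h] at h2
  simp only [auxI] at h2
  rw [h2]
  by_cases hC : (2:ℤ) ^ s ∣ C
  · obtain ⟨C, rfl⟩ := hC
    have := aux_main w d (2 ^ s * aX) (2 * aX * lX + bX) (-(2 ^ s * aY)) (-(2 * aY * lY + bY)) C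
    rw [show d + w = w + d by ring]
    convert this using 1
    unfold auxN
    refine Finset.sum_congr rfl fun x _ => Finset.sum_congr rfl fun y _ => ?_
    rw [← auxI_mul (2 ^ s) _ _ (by positivity), ← pow_add]
    unfold auxI
    congr 2
    ring
  · apply aux_dz
    refine Finset.sum_eq_zero fun x _ => Finset.sum_eq_zero fun y _ => ?_
    rw [if_neg]
    intro h'
    apply hC
    have h3 : (2:ℤ) ^ s ∣ 2 ^ (s + w) := pow_dvd_pow _ (by omega)
    exact (dvd_add_left (Dvd.intro _ rfl)).1 (h3.trans h')
end

section
/- Let r ≥ 1 and let d, v, q be natural numbers with d ≤ v ≤ r and d ≤ q ≤ r. Let a_x, b_x, c_x, a_y, b_y, c_y, l_x, l_y ∈ Z_{2^r}, and define P(x) = a_x x^2 + b_x x + c_x and Q(y, h) = a_y y^2 + b_y y + c_y + 2^{r-d} h. Then 2^{min(v,q)+d} divides the number of triples of natural numbers (j_x, j_y, j_h) with j_x < 2^v, j_y < 2^q, j_h < 2^d such that P(l_x + 2^{r-v} j_x) = Q(l_y + 2^{r-q} j_y, j_h) holds in Z_{2^r}. -/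
open Finset in
theorem aux_split_s17 (m n : ℕ) (f : ℕ → ℕ) :
    ∑ j ∈ range (n * m), f j = ∑ k ∈ range n, ∑ i ∈ range m, f (k + n * i) := by
  rw [Finset.sum_comm]
  induction m with
  | zero => simp
  | succ m ih =>
    rw [Nat.mul_succ, Finset.sum_range_add, ih, Finset.sum_range_succ]
    congr 1
    exact Finset.sum_congr rfl fun k _ => by rw [Nat.add_comm]

open Finset in
theorem aux_periodic (m n : ℕ) (f : ℕ → ℕ) (h : ∀ k i, f (k + n * i) = f k) :
    ∑ j ∈ range (n * m), f j = m * ∑ k ∈ range n, f k := by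
  rw [aux_split_s17]
  simp [h, Finset.mul_sum]

/-- unique solution of a "linear" equation -/
theorem aux_lin (n : ℕ) : ∀ a A h : ℤ, Odd A →
    ∑ x ∈ Finset.range (2 ^ n), (if (2 ^ n : ℤ) ∣ 2 * a * (x:ℤ) ^ 2 + A * x + h then 1 else 0) = 1 := by
  induction n with
  | zero => intro a A h _; simp
  | succ n ih =>
    intro a A h hA
    have key : ∀ e c : ℤ, 2 * a * e ^ 2 + A * e + h = 2 * c → ∀ x : ℤ,
        ((2 ^ (n+1) : ℤ) ∣ 2 * a * (e + 2 * x) ^ 2 + A * (e + 2 * x) + h ↔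
        (2 ^ n : ℤ) ∣ 2 * (2 * a) * x ^ 2 + (A + 4 * a * e) * x + c) := by
      intro e c hc x
      rw [show 2 * a * (e + 2 * x) ^ 2 + A * (e + 2 * x) + h =
        2 * (2 * (2 * a) * x ^ 2 + (A + 4 * a * e) * x + c) by linear_combination hc, pow_succ']
      exact mul_dvd_mul_iff_left (by norm_num)
    have key2 : ∀ e : ℤ, Odd (A * e + h) → ∀ x : ℤ,
        ¬ ((2 ^ (n+1) : ℤ) ∣ 2 * a * (e + 2 * x) ^ 2 + A * (e + 2 * x) + h) := by
      rintro e ⟨c, hc⟩ x hd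
      have h2 : (2 : ℤ) ∣ 2 * a * (e + 2 * x) ^ 2 + A * (e + 2 * x) + h :=
        (dvd_pow_self 2 (by omega)).trans hd
      rw [show 2 * a * (e + 2 * x) ^ 2 + A * (e + 2 * x) + h =
        2 * (a * (e + 2 * x) ^ 2 + A * x + c) + 1 by linear_combination hc] at h2
      omega
    rw [pow_succ', aux_split_s17]
    simp only [Finset.sum_range_succ, Finset.sum_range_zero, zero_add]
    push_cast
    rcases Int.even_or_odd h with ⟨c, hc⟩ | hh
    · have h0 := key 0 c (by rw [hc]; ring)
      have h1 := key2 1 (by rw [mul_one]; exact hA.add_even ⟨c, hc⟩)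
      have := ih (2 * a) (A + 4 * a * 0) c (by simpa using hA)
      simp only [zero_add] at h0
      simp only [h0, h1, this]
      simp
    · have h0 := key2 0 (by simpa using hh)
      obtain ⟨c, hc⟩ := hA.add_odd hh
      have h1 := key 1 (a + c) (by linear_combination hc)
      have := ih (2 * a) (A + 4 * a * 1) (a + c) (by
        refine hA.add_even ⟨2 * a, by ring⟩)
      simp only [zero_add] at h0
      simp only [h0, h1, this]
      simp

theorem aux_per {n : ℕ} {a A D : ℤ} (k i : ℕ) :
    (2 ^ n : ℤ) ∣ a * ((k + 2 ^ n * i : ℕ) : ℤ) ^ 2 + A * ((k + 2 ^ n * i : ℕ) : ℤ) + D ↔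
    (2 ^ n : ℤ) ∣ a * (k : ℤ) ^ 2 + A * k + D := by
  push_cast
  rw [show a * ((k:ℤ) + 2 ^ n * i) ^ 2 + A * ((k:ℤ) + 2 ^ n * i) + D =
    2 ^ n * (a * (2 * k * i + 2 ^ n * i ^ 2) + A * i) + (a * (k : ℤ) ^ 2 + A * k + D) by ring]
  exact dvd_add_right (dvd_mul_right _ _)

/-- number of solutions mod `2^n` in a box of side `2^v` -/
def NS (v n : ℕ) (a A b B C : ℤ) : ℕ :=
  ∑ x ∈ Finset.range (2 ^ v), ∑ y ∈ Finset.range (2 ^ v),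
    if (2 ^ n : ℤ) ∣ (a * (x:ℤ) ^ 2 + A * x) + (b * (y:ℤ) ^ 2 + B * y) + C then 1 else 0

theorem NS_lift (n d : ℕ) (a A b B C : ℤ) :
    NS (n + d) n a A b B C = 2 ^ d * 2 ^ d * NS n n a A b B C := by
  unfold NS
  rw [pow_add, aux_periodic]
  · rw [mul_assoc]
    congr 1
    rw [Finset.mul_sum]
    refine Finset.sum_congr rfl fun x _ => ?_
    rw [aux_periodic]
    intro k i
    have := aux_per (n := n) (a := b) (A := B) (D := a * (x:ℤ) ^ 2 + A * x + C) k i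
    refine if_congr ?_ rfl rfl
    convert this using 2 <;> ring
  · intro k i
    refine Finset.sum_congr rfl fun y _ => ?_
    have := aux_per (n := n) (a := a) (A := A) (D := b * (y:ℤ) ^ 2 + B * y + C) k i
    refine if_congr ?_ rfl rfl
    convert this using 2 <;> ring

theorem NS_swap (v n : ℕ) (a A b B C : ℤ) : NS v n a A b B C = NS v n b B a A C := by
  unfold NS
  rw [Finset.sum_comm]
  refine Finset.sum_congr rfl fun x _ => Finset.sum_congr rfl fun y _ => ?_
  refine if_congr ?_ rfl rfl
  rw [add_comm (a * (y:ℤ) ^ 2 + A * y)]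

theorem NS_scale (v n s : ℕ) (a A b B C : ℤ) :
    NS v (n + s) (2 ^ s * a) (2 ^ s * A) (2 ^ s * b) (2 ^ s * B) (2 ^ s * C) = NS v n a A b B C := by
  unfold NS
  refine Finset.sum_congr rfl fun x _ => Finset.sum_congr rfl fun y _ => ?_
  refine if_congr ?_ rfl rfl
  rw [show 2 ^ s * a * (x:ℤ) ^ 2 + 2 ^ s * A * x + (2 ^ s * b * (y:ℤ) ^ 2 + 2 ^ s * B * y) + 2 ^ s * C
    = 2 ^ s * ((a * (x:ℤ) ^ 2 + A * x) + (b * (y:ℤ) ^ 2 + B * y) + C) by ring, pow_add, mul_comm]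
  exact mul_dvd_mul_iff_left (by positivity)

theorem NS_zero (v n s : ℕ) (a A b B C : ℤ) (h : ¬ (2 ^ s : ℤ) ∣ C) :
    NS v (n + s) (2 ^ s * a) (2 ^ s * A) (2 ^ s * b) (2 ^ s * B) C = 0 := by
  unfold NS
  refine Finset.sum_eq_zero fun x _ => Finset.sum_eq_zero fun y _ => ?_
  refine if_neg fun hd => h ?_
  have h2 : (2 ^ s : ℤ) ∣ _ := (pow_dvd_pow (2:ℤ) (Nat.le_add_left s n)).trans hd
  rw [show 2 ^ s * a * (x:ℤ) ^ 2 + 2 ^ s * A * x + (2 ^ s * b * (y:ℤ) ^ 2 + 2 ^ s * B * y) + C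
    = 2 ^ s * ((a * (x:ℤ) ^ 2 + A * x) + (b * (y:ℤ) ^ 2 + B * y)) + C by ring] at h2
  exact (dvd_add_right (dvd_mul_right _ _)).1 h2

theorem NS_scale_dvd (v n s m : ℕ) (a A b B C : ℤ)
    (H : ∀ C, m ∣ NS v n a A b B C) :
    m ∣ NS v (n + s) (2 ^ s * a) (2 ^ s * A) (2 ^ s * b) (2 ^ s * B) C := by
  by_cases h : (2 ^ s : ℤ) ∣ C
  · obtain ⟨c, rfl⟩ := h
    rw [NS_scale]; exact H c
  · rw [NS_zero _ _ _ _ _ _ _ _ h]; exact dvd_zero _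

theorem NS_split (v n : ℕ) (a A b B C : ℤ) :
    NS (v + 1) n a A b B C = ∑ e ∈ Finset.range 2, ∑ f ∈ Finset.range 2,
      NS v n (4 * a) (4 * a * e + 2 * A) (4 * b) (4 * b * f + 2 * B)
        ((a * (e:ℤ) ^ 2 + A * e) + (b * (f:ℤ) ^ 2 + B * f) + C) := by
  unfold NS
  rw [pow_succ', aux_split_s17]
  refine Finset.sum_congr rfl fun e _ => ?_
  rw [Finset.sum_comm (s := Finset.range 2)]
  refine Finset.sum_congr rfl fun x _ => ?_
  rw [aux_split_s17]
  refine Finset.sum_congr rfl fun f _ => Finset.sum_congr rfl fun y _ => ?_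
  refine if_congr ?_ rfl rfl
  push_cast
  ring_nf

theorem NS_odd (n : ℕ) (a A b B C : ℤ) (hA : Odd A) :
    NS n n (2 * a) A b B C = 2 ^ n := by
  rw [NS_swap]
  unfold NS
  have : ∀ y : ℕ, ∑ x ∈ Finset.range (2 ^ n),
      (if (2 ^ n : ℤ) ∣ (b * (y:ℤ) ^ 2 + B * y) + (2 * a * (x:ℤ) ^ 2 + A * x) + C then 1 else 0) = 1 := by
    intro y
    refine Eq.trans ?_ (aux_lin n a A (b * (y:ℤ) ^ 2 + B * y + C) hA)
    refine Finset.sum_congr rfl fun x _ => if_congr ?_ rfl rfl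
    ring_nf
  simp [this]

theorem NS_odd' (n : ℕ) (a A b B C : ℤ) (hA : Odd A) :
    NS n (n+1) (4 * a) (2 * A) (4 * b) (2 * B) C = if 2 ∣ C then 2 ^ n else 0 := by
  have e1 : (4 * a) = 2 ^ 1 * (2 * a) := by ring
  have e2 : (4 * b) = 2 ^ 1 * (2 * b) := by ring
  split_ifs with h
  · obtain ⟨c, rfl⟩ := h
    rw [← NS_odd n a A (2 * b) B c hA, ← NS_scale n n 1, e1, e2]
    simp
  · have := NS_zero n n 1 (2 * a) A (2 * b) B C (by simpa using h)
    rw [← this, e1, e2]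
    simp

theorem NS_par (a A b B C : ℤ) (m : ℕ) :
    2 * m ∣ ∑ e ∈ Finset.range 2, ∑ f ∈ Finset.range 2,
      if 2 ∣ ((a * (e:ℤ) ^ 2 + A * e) + (b * (f:ℤ) ^ 2 + B * f) + C) then m else 0 := by
  simp only [Finset.sum_range_succ, Finset.sum_range_zero, zero_add]
  simp only [Nat.cast_zero, Nat.cast_one]
  norm_num
  have h4 : 2 * m ∣ m + m + (m + m) := ⟨2, by ring⟩
  have h2 : 2 * m ∣ m + m := ⟨1, by ring⟩
  split_ifs <;> first | omega | (simp only [zero_add, add_zero]; first | exact h4 | exact h2 | exact dvd_zero _)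

theorem NS_oddcase (n : ℕ) (a A b B C : ℤ) (hA : Odd A) :
    2 ^ (n + 1) ∣ NS (n + 1) (n + 1) a A b B C := by
  rw [NS_split, pow_succ']
  convert NS_par a A b B C (2 ^ n) using 1
  refine Finset.sum_congr rfl fun e _ => Finset.sum_congr rfl fun f _ => ?_
  rw [← NS_odd' n a (A + 2 * a * e) b (B + 2 * b * f)]
  · congr 1 <;> ring
  · exact hA.add_even ⟨a * e, by ring⟩

theorem NS_main (n : ℕ) : ∀ a A b B C : ℤ, 2 ^ n ∣ NS n n a A b B C := by
  induction n using Nat.strong_induction_on with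
  | _ n ih =>
  intro a A b B C
  match n, ih with
  | 0, _ => simp
  | n + 1, ih =>
    by_cases hA : Odd A
    · exact NS_oddcase n _ _ _ _ _ hA
    by_cases hB : Odd B
    · rw [NS_swap]; exact NS_oddcase n _ _ _ _ _ hB
    rw [Int.not_odd_iff_even] at hA hB
    match n, ih with
    | 0, _ =>
      rw [NS_split]
      refine (show 2 ^ (0 + 1) ∣ _ from NS_par a A b B C 1).trans (dvd_of_eq ?_)
      refine Finset.sum_congr rfl fun e _ => Finset.sum_congr rfl fun f _ => ?_
      simp only [NS, pow_zero, Finset.sum_range_one]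
      simp
    | n + 1, ih =>
      obtain ⟨A, rfl⟩ := hA
      obtain ⟨B, rfl⟩ := hB
      rw [NS_split]
      refine Finset.dvd_sum fun e _ => Finset.dvd_sum fun f _ => ?_
      have := NS_scale_dvd (n+1) n 2 (2 ^ (n+1+1)) a (a * e + A) b (b * f + B)
        (a * (e:ℤ) ^ 2 + (A + A) * e + (b * (f:ℤ) ^ 2 + (B + B) * f) + C) (by
          intro C
          rw [NS_lift, pow_succ, pow_succ, mul_assoc, mul_comm]
          exact mul_dvd_mul dvd_rfl (ih n (by omega) _ _ _ _ _))
      refine this.trans (dvd_of_eq ?_)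
      congr 1 <;> ring

theorem NS_main' (v d : ℕ) (hd : d ≤ v) (a A b B C : ℤ) : 2 ^ (v + d) ∣ NS v (v - d) a A b B C := by
  obtain ⟨n, rfl⟩ := Nat.exists_eq_add_of_le' hd
  rw [Nat.add_sub_cancel, NS_lift, show n + d + d = d + d + n by ring, pow_add, pow_add]
  exact mul_dvd_mul dvd_rfl (NS_main n _ _ _ _ _)

theorem aux_box (r d v q : ℕ) (hdv : d ≤ v) (hvq : v ≤ q) (hq : q ≤ r)
    (a A b B C l m : ℤ) :
    2 ^ (v + d) ∣ ∑ i ∈ Finset.range (2 ^ v), ∑ j ∈ Finset.range (2 ^ q),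
      if (2 ^ (r - d) : ℤ) ∣ (a * (l + 2 ^ (r - v) * (i:ℤ)) ^ 2 + A * (l + 2 ^ (r - v) * (i:ℤ)))
        + (b * (m + 2 ^ (r - q) * (j:ℤ)) ^ 2 + B * (m + 2 ^ (r - q) * (j:ℤ))) + C then 1 else 0 := by
  obtain ⟨p, rfl⟩ := Nat.exists_eq_add_of_le' hvq
  obtain ⟨t, rfl⟩ := Nat.exists_eq_add_of_le' hq
  rw [show t + (p + v) - v = t + p by omega, show t + (p + v) - (p + v) = t by omega,
    show t + (p + v) - d = (v - d) + (t + p) by omega]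
  simp only [pow_add 2 p v, aux_split_s17]
  rw [Finset.sum_comm]
  refine Finset.dvd_sum fun k _ => ?_
  have := NS_scale_dvd v (v - d) (t + p) (2 ^ (v + d)) (a * 2 ^ (t + p)) (2 * a * l + A)
    (b * 2 ^ (t + p)) (2 * b * (m + 2 ^ t * k) + B)
    (a * l ^ 2 + A * l + (b * (m + 2 ^ t * k) ^ 2 + B * (m + 2 ^ t * k)) + C)
    (fun C => NS_main' v d hdv _ _ _ _ _)
  refine this.trans (dvd_of_eq ?_)
  unfold NS
  refine Finset.sum_congr rfl fun x _ => Finset.sum_congr rfl fun y _ => ?_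
  refine if_congr ?_ rfl rfl
  push_cast
  ring_nf

theorem aux_h_s17 (r d : ℕ) (hd : d ≤ r) (D : ℤ) :
    ∑ h ∈ Finset.range (2 ^ d), (if (2 ^ r : ℤ) ∣ D - 2 ^ (r - d) * (h:ℤ) then 1 else 0)
      = if (2 ^ (r - d) : ℤ) ∣ D then 1 else 0 := by
  obtain ⟨s, rfl⟩ := Nat.exists_eq_add_of_le' hd
  rw [Nat.add_sub_cancel]
  split_ifs with h
  · obtain ⟨c, rfl⟩ := h
    refine Eq.trans ?_ (aux_lin d 0 (-1) c (by decide))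
    refine Finset.sum_congr rfl fun x _ => if_congr ?_ rfl rfl
    rw [← mul_sub, pow_add, mul_dvd_mul_iff_left (by positivity)]
    ring_nf
  · refine Finset.sum_eq_zero fun x _ => if_neg fun hd => h ?_
    have := (pow_dvd_pow (2:ℤ) (Nat.le_add_right s d)).trans hd
    exact (dvd_sub_left (dvd_mul_right _ _)).1 this

/-- For `P(x) = aₓx² + bₓx + cₓ` and `Q(y,h) = a_y y² + b_y y + c_y + 2^{r-d} h` over
`ℤ/2^r` with `d ≤ v ≤ r` and `d ≤ q ≤ r`, the number of triples `(jₓ, j_y, j_h)` with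
`jₓ < 2^v`, `j_y < 2^q`, `j_h < 2^d` and `P(lₓ + 2^{r-v} jₓ) = Q(l_y + 2^{r-q} j_y, j_h)`
is divisible by `2^{min(v,q)+d}`. -/
theorem stmt_17 (r d v q : ℕ) (hr : 1 ≤ r) (hdv : d ≤ v) (hv : v ≤ r)
    (hdq : d ≤ q) (hq : q ≤ r)
    (aX bX cX aY bY cY lX lY : ZMod (2 ^ r)) :
    (2 ^ (min v q + d) : ℕ) ∣
    Nat.card {t : Fin (2 ^ v) × Fin (2 ^ q) × Fin (2 ^ d) //
      aX * (lX + (2 : ZMod (2 ^ r)) ^ (r - v) * ((t.1 : ℕ) : ZMod (2 ^ r))) ^ 2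
        + bX * (lX + (2 : ZMod (2 ^ r)) ^ (r - v) * ((t.1 : ℕ) : ZMod (2 ^ r))) + cX
      = aY * (lY + (2 : ZMod (2 ^ r)) ^ (r - q) * ((t.2.1 : ℕ) : ZMod (2 ^ r))) ^ 2
        + bY * (lY + (2 : ZMod (2 ^ r)) ^ (r - q) * ((t.2.1 : ℕ) : ZMod (2 ^ r))) + cY
        + (2 : ZMod (2 ^ r)) ^ (r - d) * ((t.2.2 : ℕ) : ZMod (2 ^ r))} := by
  obtain ⟨aX, rfl⟩ := ZMod.intCast_surjective aX
  obtain ⟨bX, rfl⟩ := ZMod.intCast_surjective bX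
  obtain ⟨cX, rfl⟩ := ZMod.intCast_surjective cX
  obtain ⟨aY, rfl⟩ := ZMod.intCast_surjective aY
  obtain ⟨bY, rfl⟩ := ZMod.intCast_surjective bY
  obtain ⟨cY, rfl⟩ := ZMod.intCast_surjective cY
  obtain ⟨lX, rfl⟩ := ZMod.intCast_surjective lX
  obtain ⟨lY, rfl⟩ := ZMod.intCast_surjective lY
  classical
  rw [Nat.card_eq_fintype_card, Fintype.card_subtype, Finset.card_filter, Fintype.sum_prod_type]
  simp only [Fintype.sum_prod_type]
  have key : ∀ x y h : ℕ,
      ((aX : ZMod (2 ^ r)) * (lX + (2 : ZMod (2 ^ r)) ^ (r - v) * (x : ZMod (2 ^ r))) ^ 2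
        + bX * (lX + (2 : ZMod (2 ^ r)) ^ (r - v) * (x : ZMod (2 ^ r))) + cX
      = aY * (lY + (2 : ZMod (2 ^ r)) ^ (r - q) * (y : ZMod (2 ^ r))) ^ 2
        + bY * (lY + (2 : ZMod (2 ^ r)) ^ (r - q) * (y : ZMod (2 ^ r))) + cY
        + (2 : ZMod (2 ^ r)) ^ (r - d) * (h : ZMod (2 ^ r))) ↔
      (2 ^ r : ℤ) ∣ ((aX * (lX + 2 ^ (r - v) * (x:ℤ)) ^ 2 + bX * (lX + 2 ^ (r - v) * (x:ℤ)))
        + ((-aY) * (lY + 2 ^ (r - q) * (y:ℤ)) ^ 2 + (-bY) * (lY + 2 ^ (r - q) * (y:ℤ))) + (cX - cY))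
        - 2 ^ (r - d) * (h:ℤ) := by
    intro x y h
    have := ZMod.intCast_zmod_eq_zero_iff_dvd (((aX * (lX + 2 ^ (r - v) * (x:ℤ)) ^ 2 + bX * (lX + 2 ^ (r - v) * (x:ℤ)))
        + ((-aY) * (lY + 2 ^ (r - q) * (y:ℤ)) ^ 2 + (-bY) * (lY + 2 ^ (r - q) * (y:ℤ))) + (cX - cY))
        - 2 ^ (r - d) * (h:ℤ)) (2 ^ r)
    rw [show ((2 ^ r : ℕ) : ℤ) = 2 ^ r by push_cast; rfl] at this
    rw [← this, ← sub_eq_zero]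
    push_cast
    ring_nf
  simp only [key]
  have cv : ∀ (n : ℕ) (f : ℕ → ℕ), ∑ i : Fin n, f (i : ℕ) = ∑ i ∈ Finset.range n, f i :=
    fun n f => Fin.sum_univ_eq_sum_range f n
  have e1 := fun x y : ℕ => (cv (2 ^ d) (fun h => if (2 ^ r : ℤ) ∣ ((aX * (lX + 2 ^ (r - v) * (x:ℤ)) ^ 2 + bX * (lX + 2 ^ (r - v) * (x:ℤ)))
        + ((-aY) * (lY + 2 ^ (r - q) * (y:ℤ)) ^ 2 + (-bY) * (lY + 2 ^ (r - q) * (y:ℤ))) + (cX - cY))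
        - 2 ^ (r - d) * (h:ℤ) then 1 else 0)).trans (aux_h_s17 r d (hdv.trans hv) _)
  simp only [e1]
  have e2 := fun x : ℕ => cv (2 ^ q) (fun y => if (2 ^ (r - d) : ℤ) ∣ (aX * (lX + 2 ^ (r - v) * (x:ℤ)) ^ 2 + bX * (lX + 2 ^ (r - v) * (x:ℤ)))
        + ((-aY) * (lY + 2 ^ (r - q) * (y:ℤ)) ^ 2 + (-bY) * (lY + 2 ^ (r - q) * (y:ℤ))) + (cX - cY) then 1 else 0)
  simp only [e2]
  rw [cv (2 ^ v) (fun x => ∑ y ∈ Finset.range (2 ^ q), if (2 ^ (r - d) : ℤ) ∣ (aX * (lX + 2 ^ (r - v) * (x:ℤ)) ^ 2 + bX * (lX + 2 ^ (r - v) * (x:ℤ)))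
        + ((-aY) * (lY + 2 ^ (r - q) * (y:ℤ)) ^ 2 + (-bY) * (lY + 2 ^ (r - q) * (y:ℤ))) + (cX - cY) then 1 else 0)]
  rcases le_total v q with h | h
  · rw [min_eq_left h]
    exact aux_box r d v q hdv h hq _ _ _ _ _ _ _
  · rw [min_eq_right h, Finset.sum_comm]
    convert aux_box r d q v hdq h hv (-aY) (-bY) aX bX (cX - cY) lY lX using 1
    refine Finset.sum_congr rfl fun x _ => Finset.sum_congr rfl fun y _ => ?_
    refine if_congr ?_ rfl rfl
    rw [add_comm (aX * _ + _)]
end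

section
/- Let r ≥ 1 and let q, v, e be natural numbers with q ≤ r, v ≤ r, and e ≤ min(q, v). Let a_x, b_x, c, l_x ∈ Z_{2^r} and define P(x) = a_x x^2 + b_x x + c. For y ∈ Z_{2^r}, define the multiplicity c_S(y) = Σ_{i=0}^{2^e - 1} ( Σ_{f=0}^{v-1} f · #{ s ∈ ℕ : s < 2^{v-f-1} and y = 2^{r-e} i + 2^{r-v+f}(2s+1) } + (v+1) · [y = 2^{r-e} i] ), where [·] is 1 if the condition holds and 0 otherwise. Then 2^{e + min(q, v, ⌈r/2⌉)} divides Σ_{j=0}^{2^q - 1} c_S(P(l_x + 2^{r-q} j)). -/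
def GG (u k : ℕ) (y : ℤ) : ℕ :=
  (∑ m ∈ Finset.range k, (if (2:ℤ)^(u+m+1) ∣ y then 1 else 0)) + (if (2:ℤ)^(u+k) ∣ y then 1 else 0)

lemma two_pow_dvd (n : ℕ) (y : ℤ) : (2:ℤ)^(n+1) ∣ 2*y ↔ (2:ℤ)^n ∣ y := by
  rw [pow_succ']
  exact mul_dvd_mul_iff_left (by norm_num)

lemma GG_zero (y : ℤ) : GG 0 0 y = 1 := by simp [GG]

lemma GG_succ (u k : ℕ) (y : ℤ) : GG (u+1) k (2*y) = GG u k y := by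
  unfold GG
  congr 1
  · apply Finset.sum_congr rfl
    intro m _
    rw [show u+1+m+1 = (u+m+1)+1 by ring]
    simp only [two_pow_dvd]
  · rw [show u+1+k = (u+k)+1 by ring]
    simp only [two_pow_dvd]

lemma GG_zero_succ (k : ℕ) (y : ℤ) : GG 0 (k+1) (2*y) = 1 + GG 0 k y := by
  unfold GG
  rw [Finset.sum_range_succ']
  have h1 : ∀ m, 0+(m+1)+1 = (0+m+1)+1 := fun m => by ring
  have h2 : 0+(k+1) = (0+k)+1 := by ring
  simp only [h1, h2, two_pow_dvd]
  simp
  ring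

lemma GG_odd (u k : ℕ) (y : ℤ) (hy : ¬ (2:ℤ) ∣ y) (h : 0 < u+k) : GG u k y = 0 := by
  have key : ∀ n, 0 < n → ¬ (2:ℤ)^n ∣ y := fun n hn hd => hy ((dvd_pow_self 2 hn.ne').trans hd)
  unfold GG
  rw [if_neg (key _ h), Finset.sum_eq_zero]
  intro m _
  rw [if_neg (key _ (by omega))]

lemma GG_congr (u k : ℕ) (y z : ℤ) (h : (2:ℤ)^(u+k) ∣ y - z) : GG u k y = GG u k z := by
  have key : ∀ n, n ≤ u+k → ((2:ℤ)^n ∣ y ↔ (2:ℤ)^n ∣ z) := fun n hn =>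
    (dvd_iff_dvd_of_dvd_sub ((pow_dvd_pow 2 hn).trans h))
  unfold GG
  rw [if_congr (key _ le_rfl) rfl rfl]
  congr 1
  apply Finset.sum_congr rfl
  intro m hm
  rw [if_congr (key _ (by have := Finset.mem_range.1 hm; omega)) rfl rfl]

lemma GG_shift (t u k : ℕ) (y : ℤ) : GG (u+t) k (2^t*y) = GG u k y := by
  induction t with
  | zero => simp
  | succ t ih =>
    rw [← ih, ← GG_succ (u+t) k (2^t*y), pow_succ', mul_assoc]
    rfl

lemma sum_split (q : ℕ) (f : ℕ → ℕ) : ∑ j ∈ Finset.range (2^(q+1)), f j =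
    ∑ i ∈ Finset.range (2^q), f (2*i) + ∑ i ∈ Finset.range (2^q), f (2*i+1) := by
  rw [pow_succ]
  generalize 2^q = n
  induction n with
  | zero => simp
  | succ n ih =>
    rw [show (n+1)*2 = n*2+1+1 by ring, Finset.sum_range_succ, Finset.sum_range_succ, ih,
      Finset.sum_range_succ, Finset.sum_range_succ, mul_comm n 2]
    ring

lemma sum_half (q : ℕ) (f : ℕ → ℕ) : ∑ j ∈ Finset.range (2^(q+1)), f j =
    ∑ i ∈ Finset.range (2^q), f i + ∑ i ∈ Finset.range (2^q), f (2^q+i) := by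
  rw [pow_succ, mul_two, Finset.sum_range_add]

lemma branch (q U k : ℕ) (f : ℕ → ℤ) (C : ℤ) (h : ¬ U + k = 0) :
    (∑ i ∈ Finset.range (2^q), GG U k (2 * f i + (2*C+1)) = 0) := by
  apply Finset.sum_eq_zero
  intro i _
  apply GG_odd
  · omega
  · omega

lemma lin_odd (q U k : ℕ) (hk : U + k ≤ q) (B C : ℤ) :
    ∑ j ∈ Finset.range (2^q), GG U k ((2*B+1) * j + C) = 2^(q-U) := by
  induction q generalizing U k B C with
  | zero =>
    obtain ⟨rfl, rfl⟩ : U = 0 ∧ k = 0 := by omega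
    simp [GG_zero]
  | succ q ih =>
    -- exactly one branch survives
    have main : ∀ C' : ℤ, ¬ U + k = 0 →
        ∑ i ∈ Finset.range (2^q), GG U k (2 * ((2*B+1) * i + C')) = 2^(q+1-U) := by
      intro C' h0
      rcases U with _ | U
      · rcases k with _ | k
        · omega
        · simp only [GG_zero_succ, Finset.sum_add_distrib, ih 0 k (by omega)]
          simp
          ring
      · simp only [GG_succ, ih U k (by omega)]
        congr 1
        omega
    by_cases h0 : U + k = 0
    · obtain ⟨rfl, rfl⟩ : U = 0 ∧ k = 0 := by omega
      simp [GG_zero]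
    rw [sum_split]
    obtain ⟨C', rfl | rfl⟩ := Int.even_or_odd' C
    · have e1 : ∀ i : ℕ, (2*B+1) * ((2*i : ℕ):ℤ) + 2*C' = 2 * ((2*B+1) * i + C') := by
        intro i; push_cast; ring
      have e2 : ∀ i : ℕ, (2*B+1) * ((2*i+1 : ℕ):ℤ) + 2*C' = 2 * ((2*B+1) * i) + (2*(B+C')+1) := by
        intro i; push_cast; ring
      simp only [e1, e2]
      rw [main _ h0, branch _ _ _ _ _ h0]
      rfl
    · have e1 : ∀ i : ℕ, (2*B+1) * ((2*i : ℕ):ℤ) + (2*C'+1) = 2 * ((2*B+1) * i) + (2*C'+1) := by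
        intro i; push_cast; ring
      have e2 : ∀ i : ℕ, (2*B+1) * ((2*i+1 : ℕ):ℤ) + (2*C'+1) = 2 * ((2*B+1) * i + (B+C'+1)) := by
        intro i; push_cast; ring
      simp only [e1, e2]
      rw [main _ h0, branch _ _ _ _ _ h0]
      simp

lemma lin_dvd (q U k : ℕ) (hk : U + k ≤ q) (B C : ℤ) :
    2^(q-U) ∣ ∑ j ∈ Finset.range (2^q), GG U k (B * j + C) := by
  induction q generalizing U k B C with
  | zero => simp
  | succ q ih =>
    obtain ⟨B, rfl | rfl⟩ := Int.even_or_odd' B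
    swap
    · rw [lin_odd _ _ _ hk]
    by_cases h0 : U + k = 0
    · obtain ⟨rfl, rfl⟩ : U = 0 ∧ k = 0 := by omega
      simp [GG_zero]
    obtain ⟨C, rfl | rfl⟩ := Int.even_or_odd' C
    swap
    · have e1 : ∀ i : ℕ, (2*B) * (i:ℤ) + (2*C+1) = 2 * (B*i) + (2*C+1) := by
        intro i; ring
      simp only [e1]
      rw [branch _ _ _ _ _ h0]
      exact dvd_zero _
    have e1 : ∀ i : ℕ, (2*B) * (i:ℤ) + (2*C) = 2 * (B*i+C) := by
      intro i; ring
    simp only [e1]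
    have dbl : ∀ U k, U + k ≤ q → ∑ j ∈ Finset.range (2^(q+1)), GG U k (B * j + C) =
        2 * ∑ j ∈ Finset.range (2^q), GG U k (B * j + C) := by
      intro U k hk
      rw [sum_half, two_mul]
      congr 1
      apply Finset.sum_congr rfl
      intro i _
      apply GG_congr
      apply (pow_dvd_pow 2 hk).trans
      use B
      push_cast
      ring
    rcases U with _ | U
    · rcases k with _ | k
      · omega
      · simp only [GG_zero_succ, Finset.sum_add_distrib]
        rw [dbl 0 k (by omega)]
        apply dvd_add
        · simp
        · rw [show q+1-0 = q+1 by omega, pow_succ']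
          exact mul_dvd_mul_left _ (ih 0 k (by omega) B C)
    · simp only [GG_succ]
      rw [dbl U k (by omega), show q+1-(U+1) = q - U by omega]
      exact (ih U k (by omega) B C).mul_left 2

lemma quad_dvd (q h U k : ℕ) (hk : U + k ≤ q) (A B C : ℤ) (hA : (2:ℤ)^h ∣ A) :
    2^(min (q-U) ((q+h+1)/2)) ∣ ∑ j ∈ Finset.range (2^q), GG U k (A * j^2 + B * j + C) := by
  induction q generalizing h U k A B C with
  | zero => simp
  | succ q ih =>
    by_cases hq : q ≤ h
    · have e1 : ∀ j : ℕ, GG U k (A * j^2 + B * j + C) = GG U k ((A+B) * j + C) := by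
        intro j
        apply GG_congr
        have h2 : (2:ℤ) ∣ j^2 - j := by
          have := Int.even_mul_pred_self (j:ℤ)
          rw [show (j:ℤ)^2 - j = j * (j-1) by ring]
          exact this.two_dvd
        have h3 := mul_dvd_mul hA h2
        rw [← pow_succ] at h3
        apply (pow_dvd_pow 2 (show U + k ≤ h+1 by omega)).trans
        convert h3 using 1
        ring
      simp only [e1]
      exact (pow_dvd_pow 2 (by omega)).trans (lin_dvd _ _ _ hk _ _)
    by_cases h0 : U + k = 0
    · obtain ⟨rfl, rfl⟩ : U = 0 ∧ k = 0 := by omega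
      simp only [GG_zero, Finset.sum_const, Finset.card_range, smul_eq_mul, mul_one]
      exact pow_dvd_pow 2 (by omega)
    have main : ∀ F C : ℤ, 2^(min (q+1-U) ((q+1+h+1)/2)) ∣
        ∑ i ∈ Finset.range (2^q), GG U k (2 * (2*A * i^2 + F * i) + C) := by
      intro F C
      obtain ⟨C, rfl | rfl⟩ := Int.even_or_odd' C
      swap
      · rw [branch _ _ _ _ _ h0]
        exact dvd_zero _
      have hA' : (2:ℤ)^(h+1) ∣ 2*A := by
        rw [pow_succ']; exact mul_dvd_mul_left _ hA
      simp only [← mul_add]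
      rcases U with _ | U
      · rcases k with _ | k
        · omega
        · simp only [GG_zero_succ, Finset.sum_add_distrib]
          apply dvd_add
          · simp only [Finset.sum_const, Finset.card_range, smul_eq_mul, mul_one]
            exact pow_dvd_pow 2 (by omega)
          · exact (pow_dvd_pow 2 (by omega)).trans (ih (h+1) 0 k (by omega) _ F C hA')
      · simp only [GG_succ]
        exact (pow_dvd_pow 2 (by omega)).trans (ih (h+1) U k (by omega) _ F C hA')
    rw [sum_split]
    apply dvd_add
    · have e1 : ∀ i : ℕ, A * ((2*i : ℕ):ℤ)^2 + B * ((2*i : ℕ):ℤ) + C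
          = 2 * (2*A * i^2 + B * i) + C := by
        intro i; push_cast; ring
      simp only [e1]
      exact main B C
    · have e1 : ∀ i : ℕ, A * ((2*i+1 : ℕ):ℤ)^2 + B * ((2*i+1 : ℕ):ℤ) + C
          = 2 * (2*A * i^2 + (2*A+B) * i) + (A+B+C) := by
        intro i; push_cast; ring
      simp only [e1]
      exact main (2*A+B) (A+B+C)

lemma scale_dvd (q R : ℕ) (f : ℕ → ℤ)
    (hf : ∀ U k C, U + k ≤ q → 2^(min (q-U) R) ∣ ∑ j ∈ Finset.range (2^q), GG U k (f j + C))
    (h U k : ℕ) (C : ℤ) (hk : U + k ≤ q + h) :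
    2^(min q (min (q+h-U) R)) ∣ ∑ j ∈ Finset.range (2^q), GG U k (2^h * f j + C) := by
  induction h generalizing U k C with
  | zero =>
    simp only [pow_zero, one_mul]
    exact (pow_dvd_pow 2 (by omega)).trans (hf U k C hk)
  | succ h ih =>
    by_cases h0 : U + k = 0
    · obtain ⟨rfl, rfl⟩ : U = 0 ∧ k = 0 := by omega
      simp only [GG_zero, Finset.sum_const, Finset.card_range, smul_eq_mul, mul_one]
      exact pow_dvd_pow 2 (by omega)
    simp only [pow_succ' (2:ℤ) h, mul_assoc]
    obtain ⟨C, rfl | rfl⟩ := Int.even_or_odd' C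
    swap
    · rw [branch _ _ _ _ _ h0]
      exact dvd_zero _
    simp only [← mul_add]
    rcases U with _ | U
    · rcases k with _ | k
      · omega
      · simp only [GG_zero_succ, Finset.sum_add_distrib]
        apply dvd_add
        · simp only [Finset.sum_const, Finset.card_range, smul_eq_mul, mul_one]
          exact pow_dvd_pow 2 (by omega)
        · exact (pow_dvd_pow 2 (by omega)).trans (ih 0 k C (by omega))
    · simp only [GG_succ]
      exact (pow_dvd_pow 2 (by omega)).trans (ih U k C (by omega))

lemma card_lem (t n : ℕ) (Z : ℤ) :
    ((Finset.range (2^n)).filter (fun s : ℕ => (2:ℤ)^(t+n+1) ∣ Z - 2^t * (2*s+1))).card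
      + (if (2:ℤ)^(t+1) ∣ Z then 1 else 0) = if (2:ℤ)^t ∣ Z then 1 else 0 := by
  by_cases h1 : (2:ℤ)^t ∣ Z
  swap
  · rw [if_neg h1, if_neg (fun h => h1 ((pow_dvd_pow 2 (by omega)).trans h)), Finset.filter_false_of_mem]
    · simp
    · intro s _ h
      apply h1
      have h2 := (pow_dvd_pow (2:ℤ) (show t ≤ t+n+1 by omega)).trans h
      exact (dvd_iff_dvd_of_dvd_sub h2).2 (dvd_mul_right _ _)
  obtain ⟨z, rfl⟩ := h1
  have e : ∀ s : ℕ, (2:ℤ)^(t+n+1) ∣ 2^t*z - 2^t * (2*s+1) ↔ (2:ℤ)^(n+1) ∣ z - (2*s+1) := by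
    intro s
    rw [← mul_sub, add_assoc, pow_add]
    exact mul_dvd_mul_iff_left (by positivity)
  have e' : (2:ℤ)^(t+1) ∣ 2^t*z ↔ (2:ℤ) ∣ z := by
    rw [pow_succ]
    exact mul_dvd_mul_iff_left (by positivity)
  simp only [e, e', dvd_mul_right, if_true]
  obtain ⟨z, rfl | rfl⟩ := Int.even_or_odd' z
  · rw [if_pos (dvd_mul_right _ _), Finset.filter_false_of_mem]
    · simp
    · intro s _ h
      have := (dvd_pow_self (2:ℤ) (show n+1 ≠ 0 by omega)).trans h
      omega
  · rw [if_neg (by omega)]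
    have e2 : ∀ s : ℕ, (2:ℤ)^(n+1) ∣ 2*z+1 - (2*s+1) ↔ (2:ℤ)^n ∣ z - s := by
      intro s
      rw [← two_pow_dvd n, show 2*z+1 - (2*(s:ℤ)+1) = 2*(z-s) by ring]
    simp only [e2]
    rw [add_zero, Finset.card_eq_one]
    have hp : (0:ℤ) < 2^n := by positivity
    have hm := Int.emod_nonneg z hp.ne'
    have hm2 := Int.emod_lt_of_pos z hp
    refine ⟨(z % 2^n).toNat, ?_⟩
    ext s
    simp only [Finset.mem_filter, Finset.mem_range, Finset.mem_singleton]
    constructor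
    · rintro ⟨hs, hd⟩
      have hs' : (s:ℤ) < 2^n := by exact_mod_cast hs
      have := (Int.emod_emod_of_dvd z (dvd_refl ((2:ℤ)^n)))
      have h3 : z % 2^n = (s:ℤ) % 2^n := Int.emod_eq_emod_iff_emod_sub_eq_zero.2 (Int.emod_eq_zero_of_dvd hd)
      rw [Int.emod_eq_of_lt (by positivity) hs'] at h3
      omega
    · rintro rfl
      constructor
      · zify
        rw [Int.toNat_of_nonneg hm]
        exact hm2
      · rw [Int.toNat_of_nonneg hm]
        exact Int.dvd_self_sub_emod

lemma abel (u v : ℕ) (Z : ℤ) (c : ℕ → ℕ)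
    (hc : ∀ f < v, c f + (if (2:ℤ)^(u+f+1) ∣ Z then 1 else 0) = if (2:ℤ)^(u+f) ∣ Z then 1 else 0) :
    ∑ f ∈ Finset.range v, f * c f + (v+1) * (if (2:ℤ)^(u+v) ∣ Z then 1 else 0) = GG u v Z := by
  unfold GG
  rw [add_mul, one_mul, ← add_assoc]
  congr 1
  induction v with
  | zero => simp
  | succ n ih =>
    rw [Finset.sum_range_succ, Finset.sum_range_succ, ← ih (fun f hf => hc f (by omega)),
      ← hc n (by omega), ← add_assoc u n 1]
    ring

lemma sum_i (u k e : ℕ) (y : ℤ) :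
    ∑ i ∈ Finset.range (2^e), GG u (k+e) (y - 2^(u+k) * i) = 2^e * GG u k y := by
  have e1 : ∀ z : ℤ, GG u (k+e) z = (∑ m ∈ Finset.range k, (if (2:ℤ)^(u+m+1) ∣ z then 1 else 0))
      + GG (u+k) e z := by
    intro z
    unfold GG
    rw [Finset.sum_range_add]
    simp only [add_assoc]
  simp only [e1, Finset.sum_add_distrib]
  unfold GG
  rw [mul_add]
  congr 1
  · rw [← smul_eq_mul, ← Finset.card_range (2^e), ← Finset.sum_const, Finset.card_range]
    apply Finset.sum_congr rfl
    intro i _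
    apply Finset.sum_congr rfl
    intro m hm
    have hm := Finset.mem_range.1 hm
    have : (2:ℤ)^(u+m+1) ∣ 2^(u+k) * i := (pow_dvd_pow 2 (by omega)).mul_right _
    rw [if_congr (dvd_sub_left this) rfl rfl]
  · change ∑ i ∈ Finset.range (2^e), GG (u+k) e (y - 2^(u+k) * i) = _
    generalize u + k = t
    by_cases h : (2:ℤ)^t ∣ y
    · rw [if_pos h]
      obtain ⟨z, rfl⟩ := h
      have := lin_odd e 0 e (by omega) (-1) z
      rw [mul_one]
      rw [Nat.sub_zero] at this
      refine Eq.trans (Finset.sum_congr rfl ?_) this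
      intro i _
      rw [← GG_shift t 0 e]
      congr 1
      · omega
      · ring
    · rw [if_neg h, mul_zero]
      apply Finset.sum_eq_zero
      intro i _
      have key : ∀ n, t ≤ n → ¬ (2:ℤ)^n ∣ y - 2^t * i := by
        intro n hn hd
        exact h ((dvd_sub_left (dvd_mul_right _ _)).1 ((pow_dvd_pow 2 hn).trans hd))
      unfold GG
      rw [if_neg (key _ (by omega)), add_zero]
      apply Finset.sum_eq_zero
      intro m _
      rw [if_neg (key _ (by omega))]


/-- The size of the multiplicative intersection of the multiset
`S = (⋃_i ⋃_f f·{2^{r-e}i + 2^{r-v+f}(2s+1)}) ∪ (⋃_i (v+1)·{2^{r-e}i})`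
with the image multiset of `P(x) = aₓx² + bₓx + c` on the coset
`{lₓ + 2^{r-q} j : j < 2^q}` is divisible by `2^{e + min(q, v, ⌈r/2⌉)}`. -/
theorem stmt_18 (r q v e : ℕ) (hr : 1 ≤ r) (hq : q ≤ r) (hv : v ≤ r)
    (he : e ≤ min q v)
    (aX bX c lX : ZMod (2 ^ r))
    (P : ZMod (2 ^ r) → ZMod (2 ^ r))
    (hP : ∀ x : ZMod (2 ^ r), P x = aX * x ^ 2 + bX * x + c) :
    (2 ^ (e + min q (min v ((r + 1) / 2))) : ℕ) ∣
    ∑ j ∈ Finset.range (2 ^ q),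
      ∑ i ∈ Finset.range (2 ^ e),
        ((∑ f ∈ Finset.range v,
            f * ((Finset.range (2 ^ (v - f - 1))).filter (fun s =>
              P (lX + (2 : ZMod (2 ^ r)) ^ (r - q) * (j : ZMod (2 ^ r)))
                = (2 : ZMod (2 ^ r)) ^ (r - e) * (i : ZMod (2 ^ r))
                  + (2 : ZMod (2 ^ r)) ^ (r - v + f)
                    * ((2 * s + 1 : ℕ) : ZMod (2 ^ r)))).card)
          + (v + 1) *
            (if P (lX + (2 : ZMod (2 ^ r)) ^ (r - q) * (j : ZMod (2 ^ r)))
                = (2 : ZMod (2 ^ r)) ^ (r - e) * (i : ZMod (2 ^ r))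
             then 1 else 0)) := by
  obtain ⟨a, rfl⟩ := ZMod.intCast_surjective aX
  obtain ⟨b, rfl⟩ := ZMod.intCast_surjective bX
  obtain ⟨c, rfl⟩ := ZMod.intCast_surjective c
  obtain ⟨l, rfl⟩ := ZMod.intCast_surjective lX
  obtain ⟨heq, hev⟩ := le_min_iff.1 he
  obtain ⟨h, rfl⟩ := Nat.exists_eq_add_of_le hq
  obtain ⟨k, rfl⟩ := Nat.exists_eq_add_of_le' hev
  obtain ⟨u, hu⟩ := Nat.exists_eq_add_of_le' hv
  let Y : ℕ → ℤ := fun j => 2^h * ((a*2^h) * j^2 + (2*a*l+b) * j) + (a*l^2+b*l+c)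
  have hY : ∀ j : ℕ, P ((l : ZMod (2^(q+h))) + (2 : ZMod (2 ^ (q+h))) ^ (q+h - q) * (j : ZMod (2 ^ (q+h))))
      = ((Y j : ℤ) : ZMod (2^(q+h))) := by
    intro j
    rw [hP, Nat.add_sub_cancel_left]
    simp only [Y]
    push_cast
    ring
  have hz : ∀ x y : ℤ, ((x : ZMod (2^(q+h))) = (y : ZMod (2^(q+h)))) ↔ (2:ℤ)^(q+h) ∣ x - y := by
    intro x y
    rw [eq_comm, ZMod.intCast_eq_intCast_iff_dvd_sub]
    push_cast
    rfl
  have step : ∀ j i : ℕ, ((∑ f ∈ Finset.range (k+e),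
            f * ((Finset.range (2 ^ (k+e - f - 1))).filter (fun s =>
              P ((l : ZMod (2^(q+h))) + (2 : ZMod (2 ^ (q+h))) ^ (q+h - q) * (j : ZMod (2 ^ (q+h))))
                = (2 : ZMod (2 ^ (q+h))) ^ (q+h - e) * (i : ZMod (2 ^ (q+h)))
                  + (2 : ZMod (2 ^ (q+h))) ^ (q+h - (k+e) + f)
                    * ((2 * s + 1 : ℕ) : ZMod (2 ^ (q+h))))).card)
          + (k+e + 1) *
            (if P ((l : ZMod (2^(q+h))) + (2 : ZMod (2 ^ (q+h))) ^ (q+h - q) * (j : ZMod (2 ^ (q+h))))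
                = (2 : ZMod (2 ^ (q+h))) ^ (q+h - e) * (i : ZMod (2 ^ (q+h)))
             then 1 else 0)) = GG u (k+e) (Y j - 2^(u+k) * i) := by
    intro j i
    rw [hY]
    have c1 : ((Y j : ZMod (2^(q+h))) = (2 : ZMod (2 ^ (q+h))) ^ (q+h - e) * (i : ZMod (2 ^ (q+h))))
        ↔ (2:ℤ)^(u+(k+e)) ∣ Y j - 2^(u+k) * i := by
      rw [← hu, ← hz, show q+h-e = u+k by omega]
      push_cast
      rfl
    rw [if_congr c1 rfl rfl]
    apply abel
    intro f hf
    rw [← card_lem (u+f) (k+e-f-1)]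
    congr 2
    ext s
    simp only [Finset.mem_filter]
    refine and_congr_right (fun _ => ?_)
    rw [show u+f+(k+e-f-1)+1 = q+h by omega, sub_sub, ← hz, show q+h-e = u+k by omega,
      show q+h-(k+e) = u by omega]
    push_cast
    rfl
  simp only [step, sum_i]
  rw [← Finset.mul_sum, pow_add]
  apply mul_dvd_mul_left
  have := scale_dvd q ((q+h+1)/2) (fun j => (a*2^h) * j^2 + (2*a*l+b) * j)
    (fun U k C hk => quad_dvd q h U k hk _ _ C (dvd_mul_left _ _)) h u k (a*l^2+b*l+c) (by omega)
  rw [show q+h-u = k+e by omega] at this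
  exact this
end

section
/- Let r, m', f_s be natural numbers with m' ≤ r and f_s ≤ ⌈(r - m')/2⌉. Then Σ_{f=f_s}^{⌈(r-m')/2⌉ - 1} 2^{max(0, r-2f-3-m') + min(f+2, r-f-1) + min(m', max(0, r-2f-3))} + 2^{⌊(r+m')/2⌋} = 2^{r - f_s}. (This is the count of elements, rescaled by 2^k, of the multiset consisting of the slices for f = f_s up to ⌈(r-m')/2⌉ - 1 together with the final slice {t'} in the image description of a quadratic polynomial of type (c) over Z_{2^r}.) -/
/-- Counting identity (rescaled by `2^k`): for `m' ≤ r` and `fs ≤ ⌈(r-m')/2⌉`,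
`∑_{f=fs}^{⌈(r-m')/2⌉-1} 2^{max(0,r-2f-3-m') + min(f+2,r-f-1) + min(m',max(0,r-2f-3))}
  + 2^{⌊(r+m')/2⌋} = 2^{r-fs}`.
Here natural subtraction realizes the `max(0, ·)` truncations. -/
theorem stmt_19 (r m' fs : ℕ) (hm : m' ≤ r) (hfs : fs ≤ (r - m' + 1) / 2) :
    (∑ f ∈ Finset.Ico fs ((r - m' + 1) / 2),
        2 ^ ((r - 2 * f - 3 - m') + min (f + 2) (r - f - 1)
              + min m' (r - 2 * f - 3)))
      + 2 ^ ((r + m') / 2) = 2 ^ (r - fs) := by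
  have key : ∀ n fs N : ℕ, N = fs + n → N ≤ r →
      (∑ f ∈ Finset.Ico fs N, 2 ^ (r - f - 1)) + 2 ^ (r - N) = 2 ^ (r - fs) := by
    intro n
    induction n with
    | zero => intro fs N h _; subst h; simp
    | succ n ih =>
      intro fs N h hN
      rw [Finset.sum_eq_sum_Ico_succ_bot (by omega), add_assoc, ih (fs + 1) N (by omega) hN]
      have h1 : r - fs = (r - (fs + 1)) + 1 := by omega
      have h2 : r - fs - 1 = r - (fs + 1) := by omega
      rw [h2, h1, pow_succ]
      ring
  have hN : (r + m') / 2 = r - (r - m' + 1) / 2 := by omega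
  rw [hN, ← key ((r - m' + 1) / 2 - fs) fs ((r - m' + 1) / 2) (by omega) (by omega)]
  congr 1
  apply Finset.sum_congr rfl
  intro f hf
  rw [Finset.mem_Ico] at hf
  congr 1
  omega
end
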